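/- arXiv:math/0207008 — 2 statements merged into one kernel-verified Lean document; each statement's English description precedes it below -/
import Mathlib

section
/- Let 𝔤 = 𝔰𝔩₂(ℂ) with e, f, h and Ω = (1/2)h⊗h + e⊗f + f⊗e (the Casimir element of 𝔤⊗𝔤 for the trace form). Consider the basic trigonometric classical dynamical r-matrix r(λ) = Ω/2 + Σ_{α>0} (1/2)coth((λ,α)/2)(e_α⊗e_{−α} − e_{−α}⊗e_α), which for 𝔰𝔩₂ is r(λ) = Ω/2 + (1/2)coth(λ/2)(e⊗f − f⊗e). Then r satisfies the classical dynamical Yang–Baxter equation, and r(λ) + r²¹(λ) = Ω, i.e. r has coupling constant 1. -/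
/-!
STATEMENT 9: the basic trigonometric classical dynamical r-matrix for 𝔰𝔩₂,
`r(λ) = Ω/2 + (1/2)·coth(λ/2)·(e⊗f - f⊗e)`, `Ω = (1/2)h⊗h + e⊗f + f⊗e`,
satisfies CDYBE and has coupling constant 1: `r(λ) + r²¹(λ) = Ω`.

As in the rational case, all terms lie in 𝔤⊗𝔤(⊗𝔤) and are represented
faithfully by 4×4 (8×8) matrices via the vector representation; the dynamical
derivative term is `h^{(k)} d/dλ` in the coordinate λ = (λ,α).
-/

namespace Stmt9

abbrev M2 := Matrix (Fin 2) (Fin 2) ℂ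
abbrev M4 := Matrix (Fin 2 × Fin 2) (Fin 2 × Fin 2) ℂ
abbrev M8 := Matrix (Fin 2 × Fin 2 × Fin 2) (Fin 2 × Fin 2 × Fin 2) ℂ

def e : M2 := !![0, 1; 0, 0]
def f : M2 := !![0, 0; 1, 0]
def h : M2 := !![1, 0; 0, -1]

def k2 (A B : M2) : M4 := fun p q => A p.1 q.1 * B p.2 q.2
def k3 (A B C : M2) : M8 := fun p q => A p.1 q.1 * B p.2.1 q.2.1 * C p.2.2 q.2.2

noncomputable def coth (z : ℂ) : ℂ := Complex.cosh z / Complex.sinh z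

/-- The Casimir element Ω of 𝔤⊗𝔤 for the trace form. -/
noncomputable def Ω : M4 := (1/2 : ℂ) • k2 h h + k2 e f + k2 f e

/-- `r(λ) = Ω/2 + (1/2)coth(λ/2)(e⊗f - f⊗e)` on V ⊗ V. -/
noncomputable def r (t : ℂ) : M4 :=
  (1/2 : ℂ) • Ω + ((1/2 : ℂ) * coth (t / 2)) • (k2 e f - k2 f e)

noncomputable def r12 (t : ℂ) : M8 :=
  (1/4 : ℂ) • k3 h h 1 + ((1/2 : ℂ) + (1/2 : ℂ) * coth (t / 2)) • k3 e f 1 +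
    ((1/2 : ℂ) - (1/2 : ℂ) * coth (t / 2)) • k3 f e 1
noncomputable def r13 (t : ℂ) : M8 :=
  (1/4 : ℂ) • k3 h 1 h + ((1/2 : ℂ) + (1/2 : ℂ) * coth (t / 2)) • k3 e 1 f +
    ((1/2 : ℂ) - (1/2 : ℂ) * coth (t / 2)) • k3 f 1 e
noncomputable def r23 (t : ℂ) : M8 :=
  (1/4 : ℂ) • k3 1 h h + ((1/2 : ℂ) + (1/2 : ℂ) * coth (t / 2)) • k3 1 e f +
    ((1/2 : ℂ) - (1/2 : ℂ) * coth (t / 2)) • k3 1 f e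

noncomputable def D (g : ℂ → M8) (t : ℂ) : M8 := fun p q => deriv (fun s => g s p q) t

/-- `r²¹` is `r` with the tensor factors swapped. -/
noncomputable def r21 (t : ℂ) : M4 := fun p q => r t (p.2, p.1) (q.2, q.1)

/-!
Take three mutually commuting actions of `𝔰𝔩₂` on an associative algebra, as in `U(𝔤)^{⊗3}`. For
`r = 2κΩ + φ (e ⊗ f - f ⊗ e)`, bilinearity and the relations of `𝔰𝔩₂` collapse
`[r¹², r¹³] + [r¹², r²³] + [r¹³, r²³]` to `φ² - 4κ²` times the expression that appears, with
coefficient `φ'`, in the dynamical term. The CDYBE is therefore the Riccati equation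
`φ' = 4κ² - φ²`, and `φ = (1/2) coth (λ/2)` solves it for `κ = 1/4`.
-/

attribute [local instance] LieRing.ofAssociativeRing

section Sl2Relations

variable {L : Type*} [LieRing L] {h e f : L}

theorem lie_f_e_of_isSl2Triple (ht : IsSl2Triple h e f) : ⁅f, e⁆ = -h := by
  rw [← lie_skew, ht.lie_e_f]

theorem lie_e_h_of_isSl2Triple (ht : IsSl2Triple h e f) : ⁅e, h⁆ = -(2 • e) := by
  rw [← lie_skew, ht.lie_h_e_nsmul]

theorem lie_f_h_of_isSl2Triple (ht : IsSl2Triple h e f) : ⁅f, h⁆ = 2 • f := by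
  rw [← lie_skew, ht.lie_h_f_nsmul, neg_neg]

end Sl2Relations

section ThreeLegs

variable {K L A : Type*} [CommRing K] [LieRing L] [LieAlgebra K L] [Ring A] [Algebra K A]

theorem lie_mul_mul_of_commute {a a' b c : A} (hba' : Commute b a') (hca : Commute c a)
    (hbc : Commute b c) : ⁅a * b, a' * c⁆ = ⁅a, a'⁆ * b * c := by
  have h₁ : a * b * (a' * c) = a * a' * b * c := by
    rw [← mul_assoc, mul_assoc a b a', hba'.eq, ← mul_assoc]
  have h₂ : a' * c * (a * b) = a' * a * b * c := by
    rw [← mul_assoc, mul_assoc a' c a, hca.eq, ← mul_assoc, mul_assoc, ← hbc.eq, ← mul_assoc]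
  rw [LieRing.of_associative_ring_bracket, h₁, h₂, LieRing.of_associative_ring_bracket,
    sub_mul, sub_mul]

variable {ρ₁ ρ₂ ρ₃ : L →ₗ⁅K⁆ A}

theorem lie_leg12_leg13 (h₁₂ : ∀ x y, Commute (ρ₁ x) (ρ₂ y))
    (h₁₃ : ∀ x y, Commute (ρ₁ x) (ρ₃ y)) (h₂₃ : ∀ x y, Commute (ρ₂ x) (ρ₃ y)) (x x' y z : L) :
    ⁅ρ₁ x * ρ₂ y, ρ₁ x' * ρ₃ z⁆ = ρ₁ ⁅x, x'⁆ * ρ₂ y * ρ₃ z := by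
  rw [lie_mul_mul_of_commute (h₁₂ x' y).symm (h₁₃ x z).symm (h₂₃ y z), LieHom.map_lie]

theorem lie_leg12_leg23 (h₁₂ : ∀ x y, Commute (ρ₁ x) (ρ₂ y))
    (h₁₃ : ∀ x y, Commute (ρ₁ x) (ρ₃ y)) (h₂₃ : ∀ x y, Commute (ρ₂ x) (ρ₃ y)) (x y y' z : L) :
    ⁅ρ₁ x * ρ₂ y, ρ₂ y' * ρ₃ z⁆ = ρ₁ x * ρ₂ ⁅y, y'⁆ * ρ₃ z := by
  rw [(h₁₂ x y).eq, lie_mul_mul_of_commute (h₁₂ x y') (h₂₃ y z).symm (h₁₃ x z),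
    ← LieHom.map_lie, (h₁₂ x ⁅y, y'⁆).eq]

theorem lie_leg13_leg23 (h₁₂ : ∀ x y, Commute (ρ₁ x) (ρ₂ y))
    (h₁₃ : ∀ x y, Commute (ρ₁ x) (ρ₃ y)) (h₂₃ : ∀ x y, Commute (ρ₂ x) (ρ₃ y)) (x y z z' : L) :
    ⁅ρ₁ x * ρ₃ z, ρ₂ y * ρ₃ z'⁆ = ρ₁ x * ρ₂ y * ρ₃ ⁅z, z'⁆ := by
  rw [(h₁₃ x z).eq, (h₂₃ y z').eq,
    lie_mul_mul_of_commute (h₁₃ x z') (h₂₃ y z) (h₁₂ x y), ← LieHom.map_lie, mul_assoc,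
    ((h₁₃ x _).mul_left (h₂₃ y _)).eq]

/-- The image of `e ⊗ f - f ⊗ e` when the two tensor factors act through `ρ` and `σ`. -/
def rootSkew (ρ σ : L →ₗ⁅K⁆ A) (e f : L) : A :=
  ρ e * σ f - ρ f * σ e

/-- The image of `2κΩ + φ (e ⊗ f - f ⊗ e)`, `Ω = (1/2) h ⊗ h + e ⊗ f + f ⊗ e`, when the two tensor
factors act through `ρ` and `σ`. The coupling constant is `4κ`, a normalization that avoids
division in `K`; the basic solution has `κ = 1/4` and `φ = (1/2) coth (λ/2)`. -/
def sl2RMatrix (ρ σ : L →ₗ⁅K⁆ A) (h e f : L) (κ φ : K) : A :=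
  κ • (ρ h * σ h) + (2 * κ + φ) • (ρ e * σ f) + (2 * κ - φ) • (ρ f * σ e)

variable {h e f : L}

theorem lie_sl2RMatrix12_sl2RMatrix13 (ht : IsSl2Triple h e f)
    (h₁₂ : ∀ x y, Commute (ρ₁ x) (ρ₂ y)) (h₁₃ : ∀ x y, Commute (ρ₁ x) (ρ₃ y))
    (h₂₃ : ∀ x y, Commute (ρ₂ x) (ρ₃ y)) (κ φ : K) :
    ⁅sl2RMatrix ρ₁ ρ₂ h e f κ φ, sl2RMatrix ρ₁ ρ₃ h e f κ φ⁆ =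
      (4 * κ ^ 2 - φ ^ 2) • (ρ₁ h * ρ₂ f * ρ₃ e - ρ₁ h * ρ₂ e * ρ₃ f) +
      (2 * κ * (2 * κ + φ)) • (ρ₁ e * ρ₂ h * ρ₃ f - ρ₁ e * ρ₂ f * ρ₃ h) +
      (2 * κ * (2 * κ - φ)) • (ρ₁ f * ρ₂ e * ρ₃ h - ρ₁ f * ρ₂ h * ρ₃ e) := by
  simp only [sl2RMatrix, add_lie, lie_add, smul_lie, LieAlgebra.lie_smul,
    lie_leg12_leg13 h₁₂ h₁₃ h₂₃, lie_self, ht.lie_e_f, ht.lie_h_e_nsmul, ht.lie_h_f_nsmul,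
    lie_f_e_of_isSl2Triple ht, lie_e_h_of_isSl2Triple ht, lie_f_h_of_isSl2Triple ht,
    map_zero, map_neg, map_nsmul, neg_mul, zero_mul, smul_mul_assoc]
  module

theorem lie_sl2RMatrix12_sl2RMatrix23 (ht : IsSl2Triple h e f)
    (h₁₂ : ∀ x y, Commute (ρ₁ x) (ρ₂ y)) (h₁₃ : ∀ x y, Commute (ρ₁ x) (ρ₃ y))
    (h₂₃ : ∀ x y, Commute (ρ₂ x) (ρ₃ y)) (κ φ : K) :
    ⁅sl2RMatrix ρ₁ ρ₂ h e f κ φ, sl2RMatrix ρ₂ ρ₃ h e f κ φ⁆ =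
      (2 * κ - φ) ^ 2 • (ρ₁ f * ρ₂ h * ρ₃ e) - (2 * κ + φ) ^ 2 • (ρ₁ e * ρ₂ h * ρ₃ f) +
      (2 * κ * (2 * κ + φ)) • (ρ₁ h * ρ₂ e * ρ₃ f + ρ₁ e * ρ₂ f * ρ₃ h) -
      (2 * κ * (2 * κ - φ)) • (ρ₁ h * ρ₂ f * ρ₃ e + ρ₁ f * ρ₂ e * ρ₃ h) := by
  simp only [sl2RMatrix, add_lie, lie_add, smul_lie, LieAlgebra.lie_smul,
    lie_leg12_leg23 h₁₂ h₁₃ h₂₃, lie_self, ht.lie_e_f, ht.lie_h_e_nsmul, ht.lie_h_f_nsmul,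
    lie_f_e_of_isSl2Triple ht, lie_e_h_of_isSl2Triple ht, lie_f_h_of_isSl2Triple ht,
    map_zero, map_neg, map_nsmul, neg_mul, mul_neg, zero_mul, mul_zero, smul_mul_assoc,
    mul_smul_comm]
  module

theorem lie_sl2RMatrix13_sl2RMatrix23 (ht : IsSl2Triple h e f)
    (h₁₂ : ∀ x y, Commute (ρ₁ x) (ρ₂ y)) (h₁₃ : ∀ x y, Commute (ρ₁ x) (ρ₃ y))
    (h₂₃ : ∀ x y, Commute (ρ₂ x) (ρ₃ y)) (κ φ : K) :
    ⁅sl2RMatrix ρ₁ ρ₃ h e f κ φ, sl2RMatrix ρ₂ ρ₃ h e f κ φ⁆ =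
      (4 * κ ^ 2 - φ ^ 2) • (ρ₁ f * ρ₂ e * ρ₃ h - ρ₁ e * ρ₂ f * ρ₃ h) +
      (2 * κ * (2 * κ + φ)) • (ρ₁ e * ρ₂ h * ρ₃ f - ρ₁ h * ρ₂ e * ρ₃ f) +
      (2 * κ * (2 * κ - φ)) • (ρ₁ h * ρ₂ f * ρ₃ e - ρ₁ f * ρ₂ h * ρ₃ e) := by
  simp only [sl2RMatrix, add_lie, lie_add, smul_lie, LieAlgebra.lie_smul,
    lie_leg13_leg23 h₁₂ h₁₃ h₂₃, lie_self, ht.lie_e_f, ht.lie_h_e_nsmul, ht.lie_h_f_nsmul,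
    lie_f_e_of_isSl2Triple ht, lie_e_h_of_isSl2Triple ht, lie_f_h_of_isSl2Triple ht,
    map_zero, map_neg, map_nsmul, mul_neg, mul_zero, mul_smul_comm]
  module

theorem classicalYangBaxter_sl2RMatrix (ht : IsSl2Triple h e f)
    (h₁₂ : ∀ x y, Commute (ρ₁ x) (ρ₂ y)) (h₁₃ : ∀ x y, Commute (ρ₁ x) (ρ₃ y))
    (h₂₃ : ∀ x y, Commute (ρ₂ x) (ρ₃ y)) (κ φ : K) :
    ⁅sl2RMatrix ρ₁ ρ₂ h e f κ φ, sl2RMatrix ρ₁ ρ₃ h e f κ φ⁆ +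
      ⁅sl2RMatrix ρ₁ ρ₂ h e f κ φ, sl2RMatrix ρ₂ ρ₃ h e f κ φ⁆ +
      ⁅sl2RMatrix ρ₁ ρ₃ h e f κ φ, sl2RMatrix ρ₂ ρ₃ h e f κ φ⁆ =
    (φ ^ 2 - 4 * κ ^ 2) • (ρ₁ h * rootSkew ρ₂ ρ₃ e f - ρ₂ h * rootSkew ρ₁ ρ₃ e f +
      ρ₃ h * rootSkew ρ₁ ρ₂ e f) := by
  have skew₁ : ρ₁ h * rootSkew ρ₂ ρ₃ e f = ρ₁ h * ρ₂ e * ρ₃ f - ρ₁ h * ρ₂ f * ρ₃ e := by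
    simp only [rootSkew, mul_sub, mul_assoc]
  have skew₂ : ρ₂ h * rootSkew ρ₁ ρ₃ e f = ρ₁ e * ρ₂ h * ρ₃ f - ρ₁ f * ρ₂ h * ρ₃ e := by
    simp only [rootSkew, mul_sub, ← mul_assoc, (h₁₂ _ h).eq]
  have skew₃ : ρ₃ h * rootSkew ρ₁ ρ₂ e f = ρ₁ e * ρ₂ f * ρ₃ h - ρ₁ f * ρ₂ e * ρ₃ h := by
    simp only [rootSkew, mul_sub, ((h₁₃ _ h).mul_left (h₂₃ _ h)).eq]
  rw [lie_sl2RMatrix12_sl2RMatrix13 ht h₁₂ h₁₃ h₂₃, lie_sl2RMatrix12_sl2RMatrix23 ht h₁₂ h₁₃ h₂₃,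
    lie_sl2RMatrix13_sl2RMatrix23 ht h₁₂ h₁₃ h₂₃, skew₁, skew₂, skew₃]
  module

end ThreeLegs

section Dynamical

variable {L : Type*} [LieRing L] [LieAlgebra ℂ L] {φ : ℂ → ℂ} {t : ℂ}

theorem D_sl2RMatrix {φ' : ℂ} (hφ : HasDerivAt φ φ' t) (ρ σ : L →ₗ⁅ℂ⁆ M8) (h e f : L) (κ : ℂ) :
    D (fun s => sl2RMatrix ρ σ h e f κ (φ s)) t = φ' • rootSkew ρ σ e f := by
  ext p q
  have hef := (hφ.const_add (2 * κ)).mul_const ((ρ e * σ f) p q)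
  have hfe := (hφ.const_sub (2 * κ)).mul_const ((ρ f * σ e) p q)
  calc deriv (fun s => sl2RMatrix ρ σ h e f κ (φ s) p q) t
      = φ' * (ρ e * σ f) p q + -φ' * (ρ f * σ e) p q :=
        ((hef.const_add (κ * (ρ h * σ h) p q)).fun_add hfe).deriv
    _ = (φ' • rootSkew ρ σ e f) p q := by
        simp only [rootSkew, Matrix.smul_apply, Matrix.sub_apply, smul_eq_mul]
        ring

theorem sl2RMatrix_CDYBE {ρ₁ ρ₂ ρ₃ : L →ₗ⁅ℂ⁆ M8} {h e f : L} (ht : IsSl2Triple h e f)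
    (h₁₂ : ∀ x y, Commute (ρ₁ x) (ρ₂ y)) (h₁₃ : ∀ x y, Commute (ρ₁ x) (ρ₃ y))
    (h₂₃ : ∀ x y, Commute (ρ₂ x) (ρ₃ y)) {κ : ℂ} (hφ : HasDerivAt φ (4 * κ ^ 2 - φ t ^ 2) t) :
    ρ₁ h * D (fun s => sl2RMatrix ρ₂ ρ₃ h e f κ (φ s)) t -
        ρ₂ h * D (fun s => sl2RMatrix ρ₁ ρ₃ h e f κ (φ s)) t +
        ρ₃ h * D (fun s => sl2RMatrix ρ₁ ρ₂ h e f κ (φ s)) t +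
      ⁅sl2RMatrix ρ₁ ρ₂ h e f κ (φ t), sl2RMatrix ρ₁ ρ₃ h e f κ (φ t)⁆ +
      ⁅sl2RMatrix ρ₁ ρ₂ h e f κ (φ t), sl2RMatrix ρ₂ ρ₃ h e f κ (φ t)⁆ +
      ⁅sl2RMatrix ρ₁ ρ₃ h e f κ (φ t), sl2RMatrix ρ₂ ρ₃ h e f κ (φ t)⁆ = 0 := by
  have cyb := classicalYangBaxter_sl2RMatrix ht h₁₂ h₁₃ h₂₃ κ (φ t)
  simp only [D_sl2RMatrix hφ, mul_smul_comm]
  rw [add_assoc, add_assoc, ← add_assoc ⁅_, _⁆, cyb]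
  module

theorem hasDerivAt_half_coth_half (ht : Complex.sinh (t / 2) ≠ 0) :
    HasDerivAt (fun s => 1 / 2 * coth (s / 2))
      (4 * (1 / 4) ^ 2 - (1 / 2 * coth (t / 2)) ^ 2) t := by
  have hhalf : HasDerivAt (fun s : ℂ => s / 2) (1 / 2) t := (hasDerivAt_id t).div_const 2
  refine ((hhalf.ccosh.fun_div hhalf.csinh ht).const_mul (1 / 2)).congr_deriv ?_
  unfold coth
  field_simp
  ring

end Dynamical

section KroneckerLegs

open scoped Kronecker

variable (R m n : Type*) [CommRing R] [Fintype m] [DecidableEq m] [Fintype n] [DecidableEq n]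

/-- The embedding `A ↦ A ⊗ 1` of a matrix algebra into a Kronecker product. -/
def kroneckerLeft : Matrix m m R →ₐ[R] Matrix (m × n) (m × n) R :=
  (Matrix.kroneckerAlgEquiv m n R).toAlgHom.comp Algebra.TensorProduct.includeLeft

/-- The embedding `B ↦ 1 ⊗ B` of a matrix algebra into a Kronecker product. -/
def kroneckerRight : Matrix n n R →ₐ[R] Matrix (m × n) (m × n) R :=
  (Matrix.kroneckerAlgEquiv m n R).toAlgHom.comp Algebra.TensorProduct.includeRight

variable {R m n}

theorem kroneckerLeft_apply (X : Matrix m m R) : kroneckerLeft R m n X = X ⊗ₖ 1 := rfl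

theorem kroneckerRight_apply (Y : Matrix n n R) : kroneckerRight R m n Y = 1 ⊗ₖ Y := rfl

theorem kroneckerLeft_commute_kroneckerRight (X : Matrix m m R) (Y : Matrix n n R) :
    Commute (kroneckerLeft R m n X) (kroneckerRight R m n Y) := by
  simp only [Commute, SemiconjBy, kroneckerLeft_apply, kroneckerRight_apply,
    ← Matrix.mul_kronecker_mul, one_mul, mul_one]

end KroneckerLegs

section VectorRepresentation

/-- The action `x ↦ x ⊗ 1 ⊗ 1` on the first factor of `V ⊗ V ⊗ V`. -/
def leg₁ : M2 →ₗ⁅ℂ⁆ M8 := (kroneckerLeft ℂ (Fin 2) (Fin 2 × Fin 2)).toLieHom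

/-- The action `x ↦ 1 ⊗ x ⊗ 1` on the second factor of `V ⊗ V ⊗ V`. -/
def leg₂ : M2 →ₗ⁅ℂ⁆ M8 :=
  ((kroneckerRight ℂ (Fin 2) (Fin 2 × Fin 2)).comp (kroneckerLeft ℂ (Fin 2) (Fin 2))).toLieHom

/-- The action `x ↦ 1 ⊗ 1 ⊗ x` on the third factor of `V ⊗ V ⊗ V`. -/
def leg₃ : M2 →ₗ⁅ℂ⁆ M8 :=
  ((kroneckerRight ℂ (Fin 2) (Fin 2 × Fin 2)).comp (kroneckerRight ℂ (Fin 2) (Fin 2))).toLieHom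

theorem leg₁_commute_leg₂ (x y : M2) : Commute (leg₁ x) (leg₂ y) :=
  kroneckerLeft_commute_kroneckerRight x _

theorem leg₁_commute_leg₃ (x y : M2) : Commute (leg₁ x) (leg₃ y) :=
  kroneckerLeft_commute_kroneckerRight x _

theorem leg₂_commute_leg₃ (x y : M2) : Commute (leg₂ x) (leg₃ y) :=
  (kroneckerLeft_commute_kroneckerRight x y).map (kroneckerRight ℂ (Fin 2) (Fin 2 × Fin 2))

open scoped Kronecker in
theorem k3_eq_kronecker (x y z : M2) : k3 x y z = x ⊗ₖ (y ⊗ₖ z) := by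
  ext p q
  exact mul_assoc _ _ _

theorem k3_mul_k3 (x y z x' y' z' : M2) :
    k3 x y z * k3 x' y' z' = k3 (x * x') (y * y') (z * z') := by
  simp only [k3_eq_kronecker, Matrix.mul_kronecker_mul]

theorem leg₁_apply (x : M2) : leg₁ x = k3 x 1 1 := by
  rw [k3_eq_kronecker, Matrix.one_kronecker_one]
  rfl

theorem leg₂_apply (y : M2) : leg₂ y = k3 1 y 1 := by
  rw [k3_eq_kronecker]
  rfl

theorem leg₃_apply (z : M2) : leg₃ z = k3 1 1 z := by
  rw [k3_eq_kronecker]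
  rfl

theorem isSl2Triple_h_e_f : IsSl2Triple h e f where
  h_ne_zero hzero := one_ne_zero (congr_fun₂ hzero 0 0)
  lie_e_f := by
    rw [LieRing.of_associative_ring_bracket]
    ext i j
    fin_cases i <;> fin_cases j <;> norm_num [e, f, h]
  lie_h_e_nsmul := by
    rw [LieRing.of_associative_ring_bracket]
    ext i j
    fin_cases i <;> fin_cases j <;> norm_num [e, h]
  lie_h_f_nsmul := by
    rw [LieRing.of_associative_ring_bracket]
    ext i j
    fin_cases i <;> fin_cases j <;> norm_num [f, h]

theorem r12_eq_sl2RMatrix :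
    r12 = fun t => sl2RMatrix leg₁ leg₂ h e f (1 / 4) (1 / 2 * coth (t / 2)) := by
  ext1 t
  simp only [r12, sl2RMatrix, leg₁_apply, leg₂_apply, k3_mul_k3, one_mul, mul_one]
  norm_num

theorem r13_eq_sl2RMatrix :
    r13 = fun t => sl2RMatrix leg₁ leg₃ h e f (1 / 4) (1 / 2 * coth (t / 2)) := by
  ext1 t
  simp only [r13, sl2RMatrix, leg₁_apply, leg₃_apply, k3_mul_k3, one_mul, mul_one]
  norm_num

theorem r23_eq_sl2RMatrix :
    r23 = fun t => sl2RMatrix leg₂ leg₃ h e f (1 / 4) (1 / 2 * coth (t / 2)) := by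
  ext1 t
  simp only [r23, sl2RMatrix, leg₂_apply, leg₃_apply, k3_mul_k3, one_mul, mul_one]
  norm_num

theorem k2_submatrix_swap (x y : M2) : (k2 x y).submatrix Prod.swap Prod.swap = k2 y x := by
  ext p q
  exact mul_comm _ _

theorem Ω_submatrix_swap : Ω.submatrix Prod.swap Prod.swap = Ω := by
  simp only [Ω, Matrix.submatrix_add, Matrix.submatrix_smul, Pi.add_apply, Pi.smul_apply,
    k2_submatrix_swap]
  abel

theorem r21_eq (t : ℂ) :
    r21 t = (1 / 2 : ℂ) • Ω - (1 / 2 * coth (t / 2)) • (k2 e f - k2 f e) := by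
  change (r t).submatrix Prod.swap Prod.swap = _
  simp only [r, Matrix.submatrix_add, Matrix.submatrix_sub, Matrix.submatrix_smul, Pi.add_apply,
    Pi.sub_apply, Pi.smul_apply, k2_submatrix_swap, Ω_submatrix_swap]
  module

theorem r_add_r21 (t : ℂ) : r t + r21 t = Ω := by
  rw [r21_eq, r]
  module

end VectorRepresentation

/-- The basic trigonometric solution satisfies CDYBE and has coupling
constant 1. -/
theorem basic_trigonometric_CDYBE_and_coupling (lam : ℂ)
    (hlam : Complex.sinh (lam / 2) ≠ 0) :
    (k3 h 1 1 * D r23 lam - k3 1 h 1 * D r13 lam + k3 1 1 h * D r12 lam +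
        (r12 lam * r13 lam - r13 lam * r12 lam) +
        (r12 lam * r23 lam - r23 lam * r12 lam) +
        (r13 lam * r23 lam - r23 lam * r13 lam) = 0) ∧
      r lam + r21 lam = Ω := by
  refine ⟨?_, r_add_r21 lam⟩
  have cdybe := sl2RMatrix_CDYBE isSl2Triple_h_e_f leg₁_commute_leg₂ leg₁_commute_leg₃
    leg₂_commute_leg₃ (hasDerivAt_half_coth_half hlam)
  rw [r12_eq_sl2RMatrix, r13_eq_sl2RMatrix, r23_eq_sl2RMatrix, ← leg₁_apply, ← leg₂_apply,
    ← leg₃_apply]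
  exact cdybe

end Stmt9
end

section
/- Let V = ℂⁿ be the vector representation of 𝔰𝔩ₙ(ℂ), with basis vₐ of weights ωₐ. Define R(λ) ∈ End(V⊗V) by R = Σₐ E_{aa}⊗E_{aa} + Σ_{a≠b} α_{ab} E_{aa}⊗E_{bb} + Σ_{a≠b} β_{ab} E_{ab}⊗E_{ba}, with β_{ab} = 1/(λ_b−λ_a−b+a), α_{ab} = 1 for a<b, and α_{ab} = (λ_b−λ_a+a−b−1)(λ_b−λ_a+a−b+1)/(λ_b−λ_a+a−b)² for a>b. Then R(λ) satisfies the quantum dynamical Yang–Baxter equation with step 1 for generic λ. -/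
/-!
STATEMENT 14: the exchange operator for the vector representation of 𝔰𝔩ₙ
(the q → 1 limit of the quantum exchange operator), given by
`β_ab = 1/(λ_b-λ_a-b+a)`, `α_ab = 1` for a < b, and
`α_ab = (λ_b-λ_a+a-b-1)(λ_b-λ_a+a-b+1)/(λ_b-λ_a+a-b)²` for a > b,
satisfies QDYBE with step 1 for generic λ.
-/

namespace Stmt14

abbrev Mat2 (n : ℕ) := Matrix (Fin n × Fin n) (Fin n × Fin n) ℂ
abbrev Mat3 (n : ℕ) := Matrix (Fin n × Fin n × Fin n) (Fin n × Fin n × Fin n) ℂ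

def sh {n : ℕ} (γ : ℂ) (lam : Fin n → ℂ) (c : Fin n) : Fin n → ℂ :=
  fun i => lam i - γ * (if i = c then 1 else 0)

def pl12 {n : ℕ} (A : Fin n → Mat2 n) : Mat3 n := fun p q =>
  if p.2.2 = q.2.2 then A q.2.2 (p.1, p.2.1) (q.1, q.2.1) else 0

def pl13 {n : ℕ} (A : Fin n → Mat2 n) : Mat3 n := fun p q =>
  if p.2.1 = q.2.1 then A q.2.1 (p.1, p.2.2) (q.1, q.2.2) else 0

def pl23 {n : ℕ} (A : Fin n → Mat2 n) : Mat3 n := fun p q =>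
  if p.1 = q.1 then A q.1 (p.2.1, p.2.2) (q.2.1, q.2.2) else 0

def QDYBEat {n : ℕ} (γ : ℂ) (R : (Fin n → ℂ) → Mat2 n) (lam : Fin n → ℂ) : Prop :=
  pl12 (fun c => R (sh γ lam c)) * pl13 (fun _ => R lam) * pl23 (fun a => R (sh γ lam a)) =
    pl23 (fun _ => R lam) * pl13 (fun b => R (sh γ lam b)) * pl12 (fun _ => R lam)

/-- `λ_b - λ_a + a - b` for indices a, b. -/
noncomputable def x {n : ℕ} (lam : Fin n → ℂ) (a b : Fin n) : ℂ :=
  lam b - lam a + (a : ℕ) - (b : ℕ)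

/-- The exchange operator for the vector representation of 𝔰𝔩ₙ. -/
noncomputable def Rexch {n : ℕ} (lam : Fin n → ℂ) : Mat2 n := fun p q =>
  if p = q then
    (if p.1 = p.2 then 1
     else if (p.1 : ℕ) < (p.2 : ℕ) then 1
     else (x lam p.1 p.2 - 1) * (x lam p.1 p.2 + 1) / (x lam p.1 p.2) ^ 2)
  else if p.1 = q.2 ∧ p.2 = q.1 ∧ p.1 ≠ p.2 then 1 / x lam p.1 p.2
  else 0

/-!
Both sides of the QDYBE preserve weights, so each coordinate of the equation involves only the
permutations of three indices `a, b, c`. The comparison there uses three relations: unitarity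
`α_ab α_ba = 1 - β_ab²` with `β_ba = -β_ab`; the addition law `x_ac = x_ab + x_bc` of the
reciprocals `x_ab = 1 / β_ab`, when all indices differ; and the shift
`x_ab(λ - ω_a) = x_ab(λ) + 1`, when two coincide. The order of the indices, which decides whether
`α_ab` or `α_ba` is `1`, is immaterial because only their product is constrained.
-/

section WeightZero

open scoped Matrix

variable {n : ℕ}

/-- The weight-zero operator `∑ α a b • E_aa ⊗ E_bb + ∑ β a b • E_ab ⊗ E_ba`, both sums over all
pairs `(a, b)`, so that the coefficient of `E_aa ⊗ E_aa` is `α a a + β a a`. -/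
def weightZeroMatrix (α β : Fin n → Fin n → ℂ) : Mat2 n := fun p q =>
  (if p = q then α p.1 p.2 else 0) + (if p.swap = q then β p.1 p.2 else 0)

lemma pl12_weightZeroMatrix_mulVec (α β : Fin n → Fin n → Fin n → ℂ)
    (v : Fin n × Fin n × Fin n → ℂ) (a b c : Fin n) :
    (pl12 (fun d => weightZeroMatrix (α d) (β d)) *ᵥ v) (a, b, c) =
      α c a b * v (a, b, c) + β c a b * v (b, a, c) := by
  simp [Matrix.mulVec, dotProduct, pl12, weightZeroMatrix, Fintype.sum_prod_type, add_mul, ite_and,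
    Finset.sum_add_distrib]

lemma pl13_weightZeroMatrix_mulVec (α β : Fin n → Fin n → Fin n → ℂ)
    (v : Fin n × Fin n × Fin n → ℂ) (a b c : Fin n) :
    (pl13 (fun d => weightZeroMatrix (α d) (β d)) *ᵥ v) (a, b, c) =
      α b a c * v (a, b, c) + β b a c * v (c, b, a) := by
  simp [Matrix.mulVec, dotProduct, pl13, weightZeroMatrix, Fintype.sum_prod_type, add_mul, ite_and,
    Finset.sum_add_distrib]

lemma pl23_weightZeroMatrix_mulVec (α β : Fin n → Fin n → Fin n → ℂ)
    (v : Fin n × Fin n × Fin n → ℂ) (a b c : Fin n) :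
    (pl23 (fun d => weightZeroMatrix (α d) (β d)) *ᵥ v) (a, b, c) =
      α a b c * v (a, b, c) + β a b c * v (a, c, b) := by
  simp [Matrix.mulVec, dotProduct, pl23, weightZeroMatrix, Fintype.sum_prod_type, add_mul,
    Finset.sum_add_distrib]

/-- Coefficients of a unitary weight-zero operator `R`, one with `R²¹ R = 1`, that fixes every
`v_a ⊗ v_a`. Writing `P` for the flip, so that `R²¹ R = (P R)²`, the conditions say that `P R` has
trace `0` and determinant `-1` on the span of `v_a ⊗ v_b` and `v_b ⊗ v_a`. -/
structure IsUnitaryPair (α β : Fin n → Fin n → ℂ) : Prop where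
  diag_self (a : Fin n) : α a a = 1
  swap_antisymm (a b : Fin n) : β b a = -β a b
  diag_mul_diag (a b : Fin n) : α a b * α b a = 1 - β a b ^ 2

lemma IsUnitaryPair.swap_self {α β : Fin n → Fin n → ℂ} (h : IsUnitaryPair α β) (a : Fin n) :
    β a a = 0 :=
  self_eq_neg.mp (h.swap_antisymm a a)

/-- Relations at `lam` between functions `α`, `β` of the dynamical parameter that make the
weight-zero operator with these coefficients a solution of the QDYBE with step `γ`. When
`β a b = 1 / y a b`, the last two say that `y a b (λ - γ ω_a) = y a b λ + 1` and
`y a c = y a b + y b c`. -/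
structure IsDynamicalPair (γ : ℂ) (α β : (Fin n → ℂ) → Fin n → Fin n → ℂ) (lam : Fin n → ℂ) :
    Prop where
  unitary : IsUnitaryPair (α lam) (β lam)
  unitary_sh (c : Fin n) : IsUnitaryPair (α (sh γ lam c)) (β (sh γ lam c))
  diag_sh {a b c : Fin n} : a ≠ c → b ≠ c → α (sh γ lam c) a b = α lam a b
  swap_sh {a b c : Fin n} : a ≠ c → b ≠ c → β (sh γ lam c) a b = β lam a b
  swap_sh_left (a b : Fin n) : β (sh γ lam a) a b * (1 + β lam a b) = β lam a b
  swap_mul_swap {a b c : Fin n} : a ≠ b → b ≠ c → a ≠ c →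
    β lam a b * β lam b c = β lam a c * (β lam a b + β lam b c)

/-- The left-hand side `R¹²(λ - γh³) R¹³(λ) R²³(λ - γh¹)` of the QDYBE. -/
def qdybeLHS (γ : ℂ) (R : (Fin n → ℂ) → Mat2 n) (lam : Fin n → ℂ) : Mat3 n :=
  pl12 (fun c => R (sh γ lam c)) * pl13 (fun _ => R lam) * pl23 (fun a => R (sh γ lam a))

/-- The right-hand side `R²³(λ) R¹³(λ - γh²) R¹²(λ)` of the QDYBE. -/
def qdybeRHS (γ : ℂ) (R : (Fin n → ℂ) → Mat2 n) (lam : Fin n → ℂ) : Mat3 n :=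
  pl23 (fun _ => R lam) * pl13 (fun b => R (sh γ lam b)) * pl12 (fun _ => R lam)

lemma qdybeLHS_weightZeroMatrix_mulVec (γ : ℂ) (α β : (Fin n → ℂ) → Fin n → Fin n → ℂ)
    (lam : Fin n → ℂ) (v : Fin n × Fin n × Fin n → ℂ) (a b c : Fin n) :
    (qdybeLHS γ (fun μ => weightZeroMatrix (α μ) (β μ)) lam *ᵥ v) (a, b, c) =
      α (sh γ lam c) a b *
          (α lam a c * (α (sh γ lam a) b c * v (a, b, c) + β (sh γ lam a) b c * v (a, c, b)) +
            β lam a c * (α (sh γ lam c) b a * v (c, b, a) + β (sh γ lam c) b a * v (c, a, b))) +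
        β (sh γ lam c) a b *
          (α lam b c * (α (sh γ lam b) a c * v (b, a, c) + β (sh γ lam b) a c * v (b, c, a)) +
            β lam b c * (α (sh γ lam c) a b * v (c, a, b) + β (sh γ lam c) a b * v (c, b, a))) := by
  simp only [qdybeLHS, ← Matrix.mulVec_mulVec, pl12_weightZeroMatrix_mulVec,
    pl13_weightZeroMatrix_mulVec, pl23_weightZeroMatrix_mulVec]

lemma qdybeRHS_weightZeroMatrix_mulVec (γ : ℂ) (α β : (Fin n → ℂ) → Fin n → Fin n → ℂ)
    (lam : Fin n → ℂ) (v : Fin n × Fin n × Fin n → ℂ) (a b c : Fin n) :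
    (qdybeRHS γ (fun μ => weightZeroMatrix (α μ) (β μ)) lam *ᵥ v) (a, b, c) =
      α lam b c *
          (α (sh γ lam b) a c * (α lam a b * v (a, b, c) + β lam a b * v (b, a, c)) +
            β (sh γ lam b) a c * (α lam c b * v (c, b, a) + β lam c b * v (b, c, a))) +
        β lam b c *
          (α (sh γ lam c) a b * (α lam a c * v (a, c, b) + β lam a c * v (c, a, b)) +
            β (sh γ lam c) a b * (α lam b c * v (b, c, a) + β lam b c * v (c, b, a))) := by
  simp only [qdybeRHS, ← Matrix.mulVec_mulVec, pl12_weightZeroMatrix_mulVec,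
    pl13_weightZeroMatrix_mulVec, pl23_weightZeroMatrix_mulVec]

namespace IsDynamicalPair

variable {γ : ℂ} {α β : (Fin n → ℂ) → Fin n → Fin n → ℂ} {lam : Fin n → ℂ}

lemma qdybe_mulVec_apply_aab (h : IsDynamicalPair γ α β lam) (v : Fin n × Fin n × Fin n → ℂ)
    (a b : Fin n) :
    (qdybeLHS γ (fun μ => weightZeroMatrix (α μ) (β μ)) lam *ᵥ v) (a, a, b) =
      (qdybeRHS γ (fun μ => weightZeroMatrix (α μ) (β μ)) lam *ᵥ v) (a, a, b) := by
  rw [qdybeLHS_weightZeroMatrix_mulVec, qdybeRHS_weightZeroMatrix_mulVec]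
  simp only [(h.unitary_sh _).diag_self, (h.unitary_sh _).swap_self, h.unitary.diag_self,
    h.unitary.swap_self, h.unitary.swap_antisymm a b]
  linear_combination
    (α lam a b * v (a, b, a) - (1 - β lam a b) * v (b, a, a)) * h.swap_sh_left a b -
      β (sh γ lam a) a b * v (b, a, a) * h.unitary.diag_mul_diag a b

lemma qdybe_mulVec_apply_aba (h : IsDynamicalPair γ α β lam) (v : Fin n × Fin n × Fin n → ℂ)
    (a b : Fin n) :
    (qdybeLHS γ (fun μ => weightZeroMatrix (α μ) (β μ)) lam *ᵥ v) (a, b, a) =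
      (qdybeRHS γ (fun μ => weightZeroMatrix (α μ) (β μ)) lam *ᵥ v) (a, b, a) := by
  rw [qdybeLHS_weightZeroMatrix_mulVec, qdybeRHS_weightZeroMatrix_mulVec]
  simp only [(h.unitary_sh _).diag_self, (h.unitary_sh _).swap_self, h.unitary.diag_self,
    h.unitary.swap_self, h.unitary.swap_antisymm a b, (h.unitary_sh a).swap_antisymm a b]
  linear_combination
    (α lam b a * v (b, a, a) - α (sh γ lam a) a b * v (a, a, b) -
        (β (sh γ lam a) a b + β lam a b) * v (a, b, a)) * h.swap_sh_left a b +
      v (a, b, a) * ((h.unitary_sh a).diag_mul_diag a b - h.unitary.diag_mul_diag a b)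

lemma qdybe_mulVec_apply_baa (h : IsDynamicalPair γ α β lam) (v : Fin n × Fin n × Fin n → ℂ)
    (a b : Fin n) :
    (qdybeLHS γ (fun μ => weightZeroMatrix (α μ) (β μ)) lam *ᵥ v) (b, a, a) =
      (qdybeRHS γ (fun μ => weightZeroMatrix (α μ) (β μ)) lam *ᵥ v) (b, a, a) := by
  rw [qdybeLHS_weightZeroMatrix_mulVec, qdybeRHS_weightZeroMatrix_mulVec]
  simp only [(h.unitary_sh _).diag_self, (h.unitary_sh _).swap_self, h.unitary.diag_self,
    h.unitary.swap_self, h.unitary.swap_antisymm a b, (h.unitary_sh a).swap_antisymm a b]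
  linear_combination
    ((1 + β (sh γ lam a) a b) * v (a, a, b) - α (sh γ lam a) b a * v (a, b, a)) *
        h.swap_sh_left a b -
      β lam a b * v (a, a, b) * (h.unitary_sh a).diag_mul_diag a b

lemma qdybe_mulVec_apply_of_ne (h : IsDynamicalPair γ α β lam) (v : Fin n × Fin n × Fin n → ℂ)
    {a b c : Fin n} (hab : a ≠ b) (hbc : b ≠ c) (hac : a ≠ c) :
    (qdybeLHS γ (fun μ => weightZeroMatrix (α μ) (β μ)) lam *ᵥ v) (a, b, c) =
      (qdybeRHS γ (fun μ => weightZeroMatrix (α μ) (β μ)) lam *ᵥ v) (a, b, c) := by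
  rw [qdybeLHS_weightZeroMatrix_mulVec, qdybeRHS_weightZeroMatrix_mulVec]
  simp only [h.diag_sh, h.swap_sh, hab, hac, hbc, hab.symm, hac.symm, hbc.symm, ne_eq,
    not_false_eq_true, h.unitary.swap_antisymm a b, h.unitary.swap_antisymm b c]
  linear_combination
    (α lam a b * v (c, a, b) - α lam b c * v (b, c, a) +
        (β lam a b - β lam b c) * v (c, b, a)) * h.swap_mul_swap hab hbc hac +
      β lam a c * v (c, b, a) * (h.unitary.diag_mul_diag a b - h.unitary.diag_mul_diag b c)

theorem qdybeAt_weightZeroMatrix (h : IsDynamicalPair γ α β lam) :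
    QDYBEat γ (fun μ => weightZeroMatrix (α μ) (β μ)) lam := by
  refine Matrix.mulVec_injective (funext fun v => funext fun ⟨a, b, c⟩ => ?_)
  obtain rfl | hab := eq_or_ne a b
  · exact h.qdybe_mulVec_apply_aab v a c
  obtain rfl | hac := eq_or_ne a c
  · exact h.qdybe_mulVec_apply_aba v a b
  obtain rfl | hbc := eq_or_ne b c
  · exact h.qdybe_mulVec_apply_baa v b a
  exact h.qdybe_mulVec_apply_of_ne v hab hbc hac

end IsDynamicalPair

end WeightZero

section ExchangeOperator

variable {n : ℕ}

/-- The coefficient `α_ab` of `E_aa ⊗ E_bb` in the exchange operator, including `α_aa = 1`. -/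
noncomputable def diagCoeff (lam : Fin n → ℂ) (a b : Fin n) : ℂ :=
  if b < a then (x lam a b - 1) * (x lam a b + 1) / x lam a b ^ 2 else 1

/-- The coefficient `β_ab` of `E_ab ⊗ E_ba` in the exchange operator. Since `x lam a a = 0` and
`0⁻¹ = 0`, the formula also gives `β_aa = 0`. -/
noncomputable def swapCoeff (lam : Fin n → ℂ) (a b : Fin n) : ℂ :=
  (x lam a b)⁻¹

lemma x_self (lam : Fin n → ℂ) (a : Fin n) : x lam a a = 0 := by
  simp [x]

lemma x_swap (lam : Fin n → ℂ) (a b : Fin n) : x lam b a = -x lam a b := by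
  simp only [x]
  ring

lemma x_add_x (lam : Fin n → ℂ) (a b c : Fin n) : x lam a b + x lam b c = x lam a c := by
  simp only [x]
  ring

lemma x_sh (γ : ℂ) (lam : Fin n → ℂ) (a b c : Fin n) :
    x (sh γ lam c) a b =
      x lam a b + γ * (if a = c then 1 else 0) - γ * (if b = c then 1 else 0) := by
  simp only [x, sh]
  ring

lemma x_sh_of_ne (γ : ℂ) (lam : Fin n → ℂ) {a b c : Fin n} (hac : a ≠ c) (hbc : b ≠ c) :
    x (sh γ lam c) a b = x lam a b := by
  simp [x_sh, hac, hbc]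

lemma x_sh_left (γ : ℂ) (lam : Fin n → ℂ) {a b : Fin n} (hab : a ≠ b) :
    x (sh γ lam a) a b = x lam a b + γ := by
  simp [x_sh, hab.symm]

lemma x_sh_right (γ : ℂ) (lam : Fin n → ℂ) {a b : Fin n} (hab : a ≠ b) :
    x (sh γ lam b) a b = x lam a b - γ := by
  simp [x_sh, hab]

lemma x_ne_intCast {lam : Fin n → ℂ} {a b : Fin n} (h : ∀ k : ℤ, lam a - lam b ≠ k) (k : ℤ) :
    x lam a b ≠ k := by
  intro hk
  apply h ((a : ℕ) - (b : ℕ) - k)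
  simp only [x] at hk
  push_cast
  linear_combination -hk

lemma x_add_ne_zero {γ : ℂ} {lam : Fin n → ℂ} (h : ∀ a b, a ≠ b → x lam a b ≠ γ) {a b : Fin n}
    (hab : a ≠ b) : x lam a b + γ ≠ 0 := by
  intro h0
  apply h b a hab.symm
  linear_combination x_swap lam a b - h0

lemma x_sh_ne_zero {γ : ℂ} {lam : Fin n → ℂ} (h₀ : ∀ a b, a ≠ b → x lam a b ≠ 0)
    (h : ∀ a b, a ≠ b → x lam a b ≠ γ) (c : Fin n) {a b : Fin n} (hab : a ≠ b) :
    x (sh γ lam c) a b ≠ 0 := by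
  obtain rfl | hac := eq_or_ne a c
  · rw [x_sh_left γ lam hab]
    exact x_add_ne_zero h hab
  obtain rfl | hbc := eq_or_ne b c
  · rw [x_sh_right γ lam hab]
    exact sub_ne_zero.mpr (h a b hab)
  · rw [x_sh_of_ne γ lam hac hbc]
    exact h₀ a b hab

lemma Rexch_eq_weightZeroMatrix (lam : Fin n → ℂ) :
    Rexch lam = weightZeroMatrix (diagCoeff lam) (swapCoeff lam) := by
  ext ⟨a, b⟩ ⟨c, d⟩
  obtain rfl | hab := eq_or_ne a b
  · simp [Rexch, weightZeroMatrix, diagCoeff, swapCoeff, x_self]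
  · simp only [Rexch, weightZeroMatrix, diagCoeff, swapCoeff, Prod.mk.injEq, Prod.swap_prod_mk,
      Fin.lt_def]
    grind

lemma diagCoeff_mul_diagCoeff {lam : Fin n → ℂ} {a b : Fin n} (hab : a ≠ b)
    (hx : x lam a b ≠ 0) :
    diagCoeff lam a b * diagCoeff lam b a = 1 - swapCoeff lam a b ^ 2 := by
  obtain hlt | hlt := hab.lt_or_gt
  all_goals
    simp only [diagCoeff, swapCoeff, hlt, hlt.not_gt, x_swap lam a b, if_true, if_false]
    field_simp
    ring

lemma isUnitaryPair_diagCoeff_swapCoeff {lam : Fin n → ℂ} (h₀ : ∀ a b, a ≠ b → x lam a b ≠ 0) :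
    IsUnitaryPair (diagCoeff lam) (swapCoeff lam) where
  diag_self a := by simp [diagCoeff]
  swap_antisymm a b := by simp [swapCoeff, x_swap lam a b, inv_neg]
  diag_mul_diag a b := by
    obtain rfl | hab := eq_or_ne a b
    · simp [diagCoeff, swapCoeff, x_self]
    · exact diagCoeff_mul_diagCoeff hab (h₀ a b hab)

lemma swapCoeff_sh_left {lam : Fin n → ℂ} {a b : Fin n} (hab : a ≠ b) (h₀ : x lam a b ≠ 0)
    (h₁ : x lam a b + 1 ≠ 0) :
    swapCoeff (sh 1 lam a) a b * (1 + swapCoeff lam a b) = swapCoeff lam a b := by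
  rw [swapCoeff, swapCoeff, x_sh_left 1 lam hab]
  field_simp

lemma swapCoeff_mul_swapCoeff {lam : Fin n → ℂ} {a b c : Fin n} (hab : x lam a b ≠ 0)
    (hbc : x lam b c ≠ 0) (hac : x lam a c ≠ 0) :
    swapCoeff lam a b * swapCoeff lam b c =
      swapCoeff lam a c * (swapCoeff lam a b + swapCoeff lam b c) := by
  simp only [swapCoeff]
  field_simp
  linear_combination -x_add_x lam a b c

lemma isDynamicalPair_diagCoeff_swapCoeff {lam : Fin n → ℂ} (h₀ : ∀ a b, a ≠ b → x lam a b ≠ 0)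
    (h₁ : ∀ a b, a ≠ b → x lam a b ≠ 1) : IsDynamicalPair 1 diagCoeff swapCoeff lam where
  unitary := isUnitaryPair_diagCoeff_swapCoeff h₀
  unitary_sh c := isUnitaryPair_diagCoeff_swapCoeff fun _ _ hab => x_sh_ne_zero h₀ h₁ c hab
  diag_sh hac hbc := by simp only [diagCoeff, x_sh_of_ne 1 lam hac hbc]
  swap_sh hac hbc := by simp only [swapCoeff, x_sh_of_ne 1 lam hac hbc]
  swap_sh_left a b := by
    obtain rfl | hab := eq_or_ne a b
    · simp [swapCoeff, x_self]
    · exact swapCoeff_sh_left hab (h₀ a b hab) (x_add_ne_zero h₁ hab)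
  swap_mul_swap hab hbc hac := swapCoeff_mul_swapCoeff (h₀ _ _ hab) (h₀ _ _ hbc) (h₀ _ _ hac)

end ExchangeOperator

-- `x = 0` is the pole of `R(λ)`, and `x = ±1` are the further poles of its shifts `R(λ - ω_c)`.
theorem exchange_operator_satisfies_QDYBE_general (n : ℕ) (lam : Fin n → ℂ)
    (h₀ : ∀ a b : Fin n, a ≠ b → x lam a b ≠ 0) (h₁ : ∀ a b : Fin n, a ≠ b → x lam a b ≠ 1) :
    QDYBEat 1 Rexch lam := by
  rw [funext Rexch_eq_weightZeroMatrix]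
  exact (isDynamicalPair_diagCoeff_swapCoeff h₀ h₁).qdybeAt_weightZeroMatrix

/-- The exchange operator satisfies QDYBE with step 1 (generic λ). -/
theorem exchange_operator_satisfies_QDYBE (n : ℕ) (lam : Fin n → ℂ)
    (hgen : ∀ a b : Fin n, a ≠ b → ∀ k : ℤ, lam a - lam b ≠ (k : ℂ)) :
    QDYBEat 1 Rexch lam :=
  exchange_operator_satisfies_QDYBE_general n lam
    (fun a b hab => by exact_mod_cast x_ne_intCast (hgen a b hab) 0)
    (fun a b hab => by exact_mod_cast x_ne_intCast (hgen a b hab) 1)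

end Stmt14
end
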